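/- The element β = ∏_{r=0}^{h−1}(1 − ζ^{g^{nr}}) lies in the ring of integers O_Z of Z, and its field norm satisfies N_{Z/ℚ}(β) = ∏_{s=0}^{n−1} S^s(β) = p. -/

import Mathlib

set_option synthInstance.maxHeartbeats 1000000

noncomputable section

/-- `ζ = e^{2πi/p}`, a primitive `p`-th root of unity in `ℂ`. -/
def zetaC (p : ℕ) : ℂ := Complex.exp (2 * Real.pi * Complex.I / p)

/-- The Gaussian period `η_s = ∑_{r=0}^{h-1} ζ^{g^{nr+s}}`. -/
def gaussPeriod (n p h g : ℕ) (s : ℕ) : ℂ :=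
  ∑ r ∈ Finset.range h, zetaC p ^ (g ^ (n * r + s))

/-- `Z = ℚ(η)`, the subfield of `ℂ` generated over `ℚ` by the Gaussian period `η = η₀`. -/
def Zf (n p h g : ℕ) : IntermediateField ℚ ℂ :=
  IntermediateField.adjoin ℚ {gaussPeriod n p h g 0}

/-- `η` as an element of `Z = ℚ(η)`. -/
def etaZ (n p h g : ℕ) : Zf n p h g :=
  ⟨gaussPeriod n p h g 0, IntermediateField.subset_adjoin ℚ _ rfl⟩

theorem aux_sum_block {M : Type*} [CommMonoid M] (F : ℕ → M) (n h : ℕ) :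
    ∏ s ∈ Finset.range n, ∏ r ∈ Finset.range h, F (n * r + s) = ∏ k ∈ Finset.range (n * h), F k := by
  rw [Finset.prod_comm]
  induction h with
  | zero => simp
  | succ h ih => rw [Finset.prod_range_succ, ih, Nat.mul_succ, Finset.prod_range_add]

theorem aux_shift {M : Type*} [CommMonoid M] (F : ℕ → M) (n h : ℕ)
    (hF : ∀ k, F (k + n * h) = F k) (s : ℕ) :
    ∏ r ∈ Finset.range h, F (n * r + (s + n)) = ∏ r ∈ Finset.range h, F (n * r + s) := by
  have h1 := Finset.prod_range_succ' (fun r => F (n * r + s)) h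
  have h2 := Finset.prod_range_succ (fun r => F (n * r + s)) h
  have h3 : F (n * h + s) = F s := by rw [add_comm]; exact hF s
  cases h with
  | zero => simp
  | succ m =>
    rw [Finset.prod_range_succ]
    conv_rhs => rw [Finset.prod_range_succ']
    congr 1
    · refine Finset.prod_congr rfl fun r _ => ?_
      congr 1; ring
    · have := hF s
      simp only [mul_zero, zero_add]
      rw [← this]; congr 1; ring

theorem aux_mod {M : Type*} [CommMonoid M] (F : ℕ → M) (n h : ℕ)
    (hF : ∀ k, F (k + n * h) = F k) (s t : ℕ) (hst : s ≡ t [MOD n]) :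
    ∏ r ∈ Finset.range h, F (n * r + s) = ∏ r ∈ Finset.range h, F (n * r + t) := by
  have key : ∀ q s, ∏ r ∈ Finset.range h, F (n * r + (s + n * q)) =
      ∏ r ∈ Finset.range h, F (n * r + s) := by
    intro q
    induction q with
    | zero => intro s; simp
    | succ q ih =>
      intro s
      rw [← ih s, ← aux_shift F n h hF (s + n * q), Nat.mul_succ, add_assoc]
  rw [← Nat.mod_add_div s n, ← Nat.mod_add_div t n, key, key, hst]

theorem aux_perm {M : Type*} [CommMonoid M] (F : ℕ → M) (p g : ℕ) (hp : p.Prime)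
    (hg : orderOf (g : ZMod p) = p - 1) (hF : ∀ k, F (k % p) = F k) :
    (∏ k ∈ Finset.range (p - 1), F (g ^ k) = ∏ j ∈ Finset.range (p - 1), F (j + 1)) ∧
    ∀ j, ¬ p ∣ j → ∃ k, g ^ k % p = j % p := by
  have : Fact p.Prime := ⟨hp⟩
  have hp2 := hp.two_le
  have hg0 : (g : ZMod p) ≠ 0 := by
    rintro h0
    rw [h0] at hg
    have := (orderOf_pos_iff (x := (0 : ZMod p))).1 (by omega)
    rw [isOfFinOrder_iff_pow_eq_one] at this
    obtain ⟨m, hm, h⟩ := this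
    rw [zero_pow (by omega)] at h
    exact zero_ne_one h
  have hpos : ∀ k, 0 < g ^ k % p := by
    intro k
    rcases Nat.eq_zero_or_pos (g ^ k % p) with h | h
    · have h1 : ((g ^ k : ℕ) : ZMod p) = 0 :=
        (ZMod.natCast_eq_zero_iff _ _).2 (Nat.dvd_of_mod_eq_zero h)
      push_cast at h1
      exact absurd h1 (pow_ne_zero k hg0)
    · exact h
  have hlt : ∀ k, g ^ k % p < p := fun k => Nat.mod_lt _ (by omega)
  have hmaps : ∀ k ∈ Finset.range (p - 1), g ^ k % p - 1 ∈ Finset.range (p - 1) := by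
    intro k _
    have := hpos k
    have := hlt k
    simp only [Finset.mem_range]; omega
  have hinj : Set.InjOn (fun k => g ^ k % p - 1) (Finset.range (p - 1) : Set ℕ) := by
    intro a ha b hb hab
    have h1 := hpos a
    have h2 := hpos b
    have h3 : g ^ a % p = g ^ b % p := by
      simp only at hab; omega
    have h4 : ((g ^ a : ℕ) : ZMod p) = ((g ^ b : ℕ) : ZMod p) :=
      (ZMod.natCast_eq_natCast_iff _ _ _).2 h3
    push_cast at h4
    refine pow_injOn_Iio_orderOf (x := (g : ZMod p)) ?_ ?_ h4
    · rw [hg]; simpa using ha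
    · rw [hg]; simpa using hb
  have hsurj := Finset.surjOn_of_injOn_of_card_le (s := Finset.range (p - 1))
    (t := Finset.range (p - 1)) _ (by simpa [Set.MapsTo] using hmaps) hinj le_rfl
  constructor
  · refine Finset.prod_nbij (fun k => g ^ k % p - 1) hmaps hinj hsurj ?_
    intro k _
    rw [Nat.sub_add_cancel (hpos k), hF]
  · intro j hj
    have h1 : j % p ≠ 0 := fun h => hj (Nat.dvd_of_mod_eq_zero h)
    have h2 : j % p < p := Nat.mod_lt _ (by omega)
    obtain ⟨k, _, hk⟩ := hsurj (show j % p - 1 ∈ (Finset.range (p - 1) : Set ℕ) by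
      simp only [Finset.coe_range, Set.mem_Iio]; omega)
    refine ⟨k, ?_⟩
    have := hpos k
    have hk' : g ^ k % p - 1 = j % p - 1 := hk
    omega

theorem zetaC_prim (p : ℕ) (hp : p.Prime) : IsPrimitiveRoot (zetaC p) p :=
  Complex.isPrimitiveRoot_exp p hp.ne_zero

theorem zetaC_pow_mod (p : ℕ) (hp : p.Prime) (k : ℕ) : zetaC p ^ (k % p) = zetaC p ^ k := by
  conv_rhs => rw [← Nat.mod_add_div k p, pow_add, pow_mul, (zetaC_prim p hp).pow_eq_one, one_pow, mul_one]

theorem zetaC_periodic (n p h g : ℕ) (hp : p.Prime) (hph : p = n * h + 1)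
    (hg : orderOf (g : ZMod p) = p - 1) (k : ℕ) :
    zetaC p ^ (g ^ (k + n * h)) = zetaC p ^ (g ^ k) := by
  rw [← zetaC_pow_mod p hp, ← zetaC_pow_mod p hp (g ^ k)]
  congr 1
  apply (ZMod.natCast_eq_natCast_iff _ _ _).1
  have : n * h = orderOf (g : ZMod p) := by omega
  push_cast
  rw [pow_add, this, pow_orderOf_eq_one, mul_one]

/-- the conjugates of beta -/
def betaC (n p h g s : ℕ) : ℂ := ∏ r ∈ Finset.range h, (1 - zetaC p ^ (g ^ (n * r + s)))

theorem gauss_mod (n p h g : ℕ) (hp : p.Prime) (hph : p = n * h + 1)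
    (hg : orderOf (g : ZMod p) = p - 1) (s t : ℕ) (hst : s ≡ t [MOD n]) :
    gaussPeriod n p h g s = gaussPeriod n p h g t :=
  aux_mod (M := Multiplicative ℂ) (fun k => Multiplicative.ofAdd (zetaC p ^ (g ^ k))) n h
    (fun k => by rw [zetaC_periodic n p h g hp hph hg]) s t hst

theorem beta_mod (n p h g : ℕ) (hp : p.Prime) (hph : p = n * h + 1)
    (hg : orderOf (g : ZMod p) = p - 1) (s t : ℕ) (hst : s ≡ t [MOD n]) :
    betaC n p h g s = betaC n p h g t :=
  aux_mod (fun k => 1 - zetaC p ^ (g ^ k)) n h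
    (fun k => by rw [zetaC_periodic n p h g hp hph hg]) s t hst

theorem beta_prod (n p h g : ℕ) (hp : p.Prime) (hph : p = n * h + 1)
    (hg : orderOf (g : ZMod p) = p - 1) :
    ∏ s ∈ Finset.range n, betaC n p h g s = p := by
  unfold betaC
  rw [aux_sum_block (fun k => 1 - zetaC p ^ (g ^ k)), show n * h = p - 1 by omega,
    (aux_perm (fun k => 1 - zetaC p ^ k) p g hp hg (fun k => by rw [zetaC_pow_mod p hp])).1]
  have hp2 := hp.two_le
  have h1 : p - 1 + 1 = p := by omega
  have h2 : IsPrimitiveRoot (zetaC p) (p - 1 + 1) := by rw [h1]; exact zetaC_prim p hp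
  rw [h2.prod_one_sub_pow_eq_order]
  exact_mod_cast h1

theorem gauss_sum (n p h g : ℕ) (hp : p.Prime) (hph : p = n * h + 1)
    (hg : orderOf (g : ZMod p) = p - 1) :
    ∑ s ∈ Finset.range n, gaussPeriod n p h g s = -1 := by
  have e1 : ∑ s ∈ Finset.range n, gaussPeriod n p h g s
      = ∑ k ∈ Finset.range (n * h), zetaC p ^ (g ^ k) :=
    aux_sum_block (M := Multiplicative ℂ) (fun k => Multiplicative.ofAdd (zetaC p ^ (g ^ k))) n h
  have e2 : ∑ k ∈ Finset.range (p - 1), zetaC p ^ (g ^ k)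
      = ∑ k ∈ Finset.range (p - 1), zetaC p ^ (k + 1) :=
    (aux_perm (M := Multiplicative ℂ) (fun k => Multiplicative.ofAdd (zetaC p ^ k)) p g hp hg
      (fun k => by rw [zetaC_pow_mod p hp])).1
  rw [e1, show n * h = p - 1 by omega, e2]
  have h1 : p - 1 + 1 = p := by have := hp.two_le; omega
  have h2 := (zetaC_prim p hp).geom_sum_eq_zero hp.one_lt
  rw [← h1, Finset.sum_range_succ', h1] at h2
  simp only [pow_zero] at h2
  linear_combination h2

theorem zetaC_integral (p : ℕ) (hp : p.Prime) : IsIntegral ℤ (zetaC p) :=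
  (zetaC_prim p hp).isIntegral hp.pos

theorem gauss_integral (n p h g s : ℕ) (hp : p.Prime) : IsIntegral ℤ (gaussPeriod n p h g s) :=
  IsIntegral.sum _ fun _ _ => (zetaC_integral p hp).pow _

theorem beta_integral (n p h g s : ℕ) (hp : p.Prime) : IsIntegral ℤ (betaC n p h g s) :=
  IsIntegral.prod _ fun _ _ => isIntegral_one.sub ((zetaC_integral p hp).pow _)

/-- the cyclotomic field -/
abbrev Kf (p : ℕ) : IntermediateField ℚ ℂ := IntermediateField.adjoin ℚ {zetaC p}

/-- zeta in the cyclotomic field -/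
def zK (p : ℕ) : Kf p := ⟨zetaC p, IntermediateField.subset_adjoin ℚ _ rfl⟩

/-- period in the cyclotomic field -/
def etaK (n p h g s : ℕ) : Kf p := ∑ r ∈ Finset.range h, zK p ^ (g ^ (n * r + s))

/-- beta in the cyclotomic field -/
def betaK (n p h g s : ℕ) : Kf p := ∏ r ∈ Finset.range h, (1 - zK p ^ (g ^ (n * r + s)))

theorem etaK_coe (n p h g s : ℕ) : (Kf p).val (etaK n p h g s) = gaussPeriod n p h g s := by
  simp [etaK, gaussPeriod, zK]

theorem betaK_coe (n p h g s : ℕ) : (Kf p).val (betaK n p h g s) = betaC n p h g s := by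
  simp [betaK, betaC, zK]

theorem emb_K (n p h g : ℕ) (hp : p.Prime)
    (hg : orderOf (g : ZMod p) = p - 1) (φ : Kf p →ₐ[ℚ] ℂ) :
    ∃ k, φ (etaK n p h g 0) = gaussPeriod n p h g k ∧ φ (betaK n p h g 0) = betaC n p h g k := by
  have : NeZero p := ⟨hp.ne_zero⟩
  have hz : IsPrimitiveRoot (zK p) p := by
    refine IsPrimitiveRoot.of_map_of_injective (f := (Kf p).val) ?_ (Kf p).val.injective
    exact zetaC_prim p hp
  have hφ : IsPrimitiveRoot (φ (zK p)) p := hz.map_of_injective φ.injective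
  obtain ⟨j, hj, hjz⟩ := (zetaC_prim p hp).eq_pow_of_pow_eq_one hφ.pow_eq_one
  have hpj : ¬ p ∣ j := by
    intro hd
    have : j = 0 := Nat.eq_zero_of_dvd_of_lt hd hj
    rw [this, pow_zero] at hjz
    exact hφ.ne_one hp.one_lt hjz.symm
  obtain ⟨k, hk⟩ := (aux_perm (fun _ => (1 : ℂ)) p g hp hg (fun _ => rfl)).2 j hpj
  have hφz : φ (zK p) = zetaC p ^ (g ^ k) := by
    rw [← hjz, ← zetaC_pow_mod p hp (g ^ k), hk, zetaC_pow_mod p hp]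
  refine ⟨k, ?_, ?_⟩
  · simp only [etaK, gaussPeriod, map_sum, map_pow, hφz, ← pow_mul, ← pow_add, add_zero, add_comm k]
  · simp only [betaK, betaC, map_prod, map_sub, map_one, map_pow, hφz, ← pow_mul, ← pow_add,
      add_zero, add_comm k]

theorem Zf_le (n p h g : ℕ) : Zf n p h g ≤ Kf p := by
  unfold Zf
  rw [IntermediateField.adjoin_simple_le_iff, ← etaK_coe]
  exact (etaK n p h g 0).2

theorem emb_Z (n p h g : ℕ) (hp : p.Prime)
    (hg : orderOf (g : ZMod p) = p - 1) (f : Zf n p h g →ₐ[ℚ] ℂ) :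
    ∃ k, f (etaZ n p h g) = gaussPeriod n p h g k ∧
      ∀ b : Zf n p h g, (b : ℂ) = betaC n p h g 0 → f b = betaC n p h g k := by
  have hi : IsIntegral ℚ (zetaC p) := (zetaC_integral p hp).tower_top
  obtain ⟨φ, hφ⟩ := IntermediateField.exists_algHom_adjoin_of_splits (S := {zetaC p})
    (K := ℂ) (F := ℚ) (E := ℂ)
    (by rintro s rfl; exact ⟨hi, IsAlgClosed.splits _⟩) f (Zf_le n p h g)
  obtain ⟨k, h1, h2⟩ := emb_K n p h g hp hg φ
  refine ⟨k, ?_, ?_⟩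
  · have e : IntermediateField.inclusion (Zf_le n p h g) (etaZ n p h g) = etaK n p h g 0 :=
      Subtype.ext (etaK_coe n p h g 0).symm
    exact (DFunLike.congr_fun hφ (etaZ n p h g)).symm.trans ((congrArg φ e).trans h1)
  · intro b hb
    have e : IntermediateField.inclusion (Zf_le n p h g) b = betaK n p h g 0 :=
      Subtype.ext (hb.trans (betaK_coe n p h g 0).symm)
    exact (DFunLike.congr_fun hφ b).symm.trans ((congrArg φ e).trans h2)

theorem Kf_galois (p : ℕ) (hp : p.Prime) : IsGalois ℚ (Kf p) := by
  have : NeZero p := ⟨hp.ne_zero⟩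
  have hi : IsIntegral ℚ (zetaC p) := (zetaC_integral p hp).tower_top
  have : IsCyclotomicExtension {p} ℚ (Kf p) := by
    change IsCyclotomicExtension {p} ℚ (IntermediateField.adjoin ℚ {zetaC p}).toSubalgebra
    rw [IntermediateField.adjoin_simple_toSubalgebra_of_isAlgebraic hi.isAlgebraic]
    exact (zetaC_prim p hp).adjoin_isCyclotomicExtension ℚ
  exact IsCyclotomicExtension.isGalois {p} ℚ (Kf p)

theorem beta_mem (n p h g : ℕ) (hp : p.Prime) (hph : p = n * h + 1)
    (hg : orderOf (g : ZMod p) = p - 1)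
    (hd : ∀ k, gaussPeriod n p h g k = gaussPeriod n p h g 0 → k ≡ 0 [MOD n]) :
    betaC n p h g 0 ∈ Zf n p h g := by
  have := Kf_galois p hp
  have key : betaK n p h g 0 ∈ IntermediateField.adjoin ℚ {etaK n p h g 0} := by
    rw [← InfiniteGalois.fixedField_fixingSubgroup
      (IntermediateField.adjoin ℚ {etaK n p h g 0}), IntermediateField.mem_fixedField_iff]
    intro τ hτ
    have h1 : τ (etaK n p h g 0) = etaK n p h g 0 :=
      (IntermediateField.mem_fixingSubgroup_iff _ _).1 hτ _
        (IntermediateField.mem_adjoin_simple_self ℚ _)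
    obtain ⟨k, h2, h3⟩ := emb_K n p h g hp hg ((Kf p).val.comp (τ : Kf p →ₐ[ℚ] Kf p))
    have h2' : gaussPeriod n p h g 0 = gaussPeriod n p h g k :=
      (etaK_coe n p h g 0).symm.trans ((congrArg (Kf p).val h1).symm.trans h2)
    apply (Kf p).val.injective
    exact h3.trans ((beta_mod n p h g hp hph hg k 0 (hd k h2'.symm)).trans
      (betaK_coe n p h g 0).symm)
  have h5 : IntermediateField.adjoin ℚ {etaK n p h g 0} ≤ (Zf n p h g).comap (Kf p).val := by
    refine IntermediateField.adjoin_simple_le_iff.2 ?_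
    change (Kf p).val (etaK n p h g 0) ∈ Zf n p h g
    rw [etaK_coe]
    exact IntermediateField.mem_adjoin_simple_self ℚ _
  have h6 : (Kf p).val (betaK n p h g 0) ∈ Zf n p h g := h5 key
  rwa [betaK_coe] at h6

theorem Zf_ext {n p h g : ℕ} {E : Type*} [Field E] [Algebra ℚ E] (f f' : Zf n p h g →ₐ[ℚ] E)
    (hf : f (etaZ n p h g) = f' (etaZ n p h g)) : f = f' := by
  refine IntermediateField.algHom_ext_of_eq_adjoin ℚ (S := Zf n p h g)
    (s := {gaussPeriod n p h g 0}) rfl ?_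
  rintro x hx
  obtain rfl : x = _ := hx
  exact hf


/-- `β = ∏_{r=0}^{h-1}(1 − ζ^{g^{nr}})` lies in the ring of integers
`O_Z` of `Z`, and its field norm satisfies `N_{Z/ℚ}(β) = ∏_{s=0}^{n-1} S^s(β) = p`. -/
theorem beta_integral_and_norm_eq_p
    (n p h g : ℕ)
    (hn : n.Prime) (hnodd : Odd n)
    (hp : p.Prime)
    (hph : p = n * h + 1)
    (hg : orderOf (g : ZMod p) = p - 1)
    (S : Zf n p h g ≃ₐ[ℚ] Zf n p h g)
    (hS : ∀ s : ℕ, (((S ^ s) (etaZ n p h g) : Zf n p h g) : ℂ) = gaussPeriod n p h g s) :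
    ∃ β : Zf n p h g,
      (β : ℂ) = (∏ r ∈ Finset.range h, (1 - zetaC p ^ (g ^ (n * r)))) ∧
      IsIntegral ℤ β ∧
      Algebra.norm ℚ β = (p : ℚ) ∧
      ∏ s ∈ Finset.range n, (S ^ s) β = (p : Zf n p h g) := by
  have hηi : IsIntegral ℚ (gaussPeriod n p h g 0) := (gauss_integral n p h g 0 hp).tower_top
  have : FiniteDimensional ℚ (Zf n p h g) := IntermediateField.adjoin.finiteDimensional hηi
  have hpow : ∀ a b : ℕ, gaussPeriod n p h g a = gaussPeriod n p h g b → S ^ a = S ^ b := by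
    intro a b hab
    rw [← hS, ← hS] at hab
    have h1 : ((S ^ a : Zf n p h g ≃ₐ[ℚ] Zf n p h g) : Zf n p h g →ₐ[ℚ] Zf n p h g)
        = (S ^ b : Zf n p h g ≃ₐ[ℚ] Zf n p h g) := Zf_ext _ _ (Subtype.ext hab)
    exact AlgEquiv.ext fun x => DFunLike.congr_fun h1 x
  have hSn : S ^ n = 1 := by
    have := hpow n 0 (gauss_mod n p h g hp hph hg n 0 (by simp [Nat.ModEq]))
    simpa using this
  have hS1 : S ≠ 1 := by
    intro h1
    have h2 : ∀ s, gaussPeriod n p h g s = gaussPeriod n p h g 0 := by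
      intro s
      rw [← hS s, ← hS 0, h1]
      simp
    have h3 := gauss_sum n p h g hp hph hg
    simp only [h2, Finset.sum_const, Finset.card_range, nsmul_eq_mul] at h3
    have hn0 : (n : ℂ) ≠ 0 := by exact_mod_cast hn.ne_zero
    have h4 : gaussPeriod n p h g 0 = algebraMap ℚ ℂ (-1 / n) := by
      simp only [eq_ratCast]
      push_cast
      field_simp
      linear_combination h3
    have h5 := gauss_integral n p h g 0 hp
    rw [h4, isIntegral_algebraMap_iff (algebraMap ℚ ℂ).injective,
      IsIntegrallyClosed.isIntegral_iff] at h5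
    obtain ⟨z, hz⟩ := h5
    simp only [eq_intCast] at hz
    have hnq : (n : ℚ) ≠ 0 := by exact_mod_cast hn.ne_zero
    field_simp at hz
    have h6 : (n : ℤ) * z = -1 := by exact_mod_cast (by linear_combination hz : (n : ℚ) * z = -1)
    have h7 : (n : ℤ) ∣ 1 := ⟨-z, by linear_combination h6⟩
    have h8 : n ∣ 1 := by exact_mod_cast h7
    exact hn.one_lt.ne' (Nat.dvd_one.1 h8)
  have hord : orderOf S = n := by
    have : Fact n.Prime := ⟨hn⟩
    exact orderOf_eq_prime hSn hS1
  have hmodEq : ∀ a b : ℕ, gaussPeriod n p h g a = gaussPeriod n p h g b → a ≡ b [MOD n] := by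
    intro a b hab
    have := pow_eq_pow_iff_modEq.1 (hpow a b hab)
    rwa [hord] at this
  have hmem := beta_mem n p h g hp hph hg (fun k => hmodEq k 0)
  set β : Zf n p h g := ⟨betaC n p h g 0, hmem⟩ with hβ
  have hβs : ∀ s, (((S ^ s) β : Zf n p h g) : ℂ) = betaC n p h g s := by
    intro s
    obtain ⟨k, h1, h2⟩ := emb_Z n p h g hp hg ((Zf n p h g).val.comp
      ((S ^ s : Zf n p h g ≃ₐ[ℚ] Zf n p h g) : Zf n p h g →ₐ[ℚ] Zf n p h g))
    have h3 := h2 β rfl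
    have h4 : gaussPeriod n p h g s = gaussPeriod n p h g k := (hS s).symm.trans h1
    exact h3.trans (beta_mod n p h g hp hph hg k s (hmodEq s k h4).symm)
  have hprod : ∏ s ∈ Finset.range n, (((S ^ s) β : Zf n p h g) : ℂ) = p := by
    rw [← beta_prod n p h g hp hph hg]
    exact Finset.prod_congr rfl fun s _ => hβs s
  refine ⟨β, ?_, ?_, ?_, ?_⟩
  · simp [hβ, betaC]
  · exact (isIntegral_algebraMap_iff (R := ℤ) (algebraMap (Zf n p h g) ℂ).injective).1
      (beta_integral n p h g 0 hp)
  · apply (algebraMap ℚ ℂ).injective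
    rw [Algebra.norm_eq_prod_embeddings ℚ ℂ β, map_natCast, ← hprod]
    symm
    refine Finset.prod_nbij (fun s => (Zf n p h g).val.comp
      ((S ^ s : Zf n p h g ≃ₐ[ℚ] Zf n p h g) : Zf n p h g →ₐ[ℚ] Zf n p h g)) ?_ ?_ ?_ ?_
    · intro s _; exact Finset.mem_univ _
    · intro a ha b hb hab
      have h1 := DFunLike.congr_fun hab (etaZ n p h g)
      have h2 : gaussPeriod n p h g a = gaussPeriod n p h g b := by
        rw [← hS a, ← hS b]; exact h1
      have ha' : a < n := by simpa using ha
      have hb' : b < n := by simpa using hb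
      exact (hmodEq a b h2).eq_of_lt_of_lt ha' hb'
    · intro f _
      obtain ⟨k, h1, _⟩ := emb_Z n p h g hp hg f
      refine ⟨k % n, by simpa using Nat.mod_lt _ hn.pos, ?_⟩
      apply Zf_ext
      rw [h1, gauss_mod n p h g hp hph hg k (k % n) (Nat.mod_modEq k n).symm, ← hS]
      rfl
    · intro s _; rfl
  · apply (algebraMap (Zf n p h g) ℂ).injective
    rw [map_prod, map_natCast]
    exact hprod

end
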